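/- (Strengthened Manipulation Deterrence) For any quorum Q > 0 there exists f* > Q (strictly greater than the quorum threshold) such that for every f with 0 < f < f*, C(f) > G(f, Q); that is, the critical faction size strictly exceeds the quorum itself. -/

import Mathlib

/-- Mobilisation cost `C(f) = c₁·f² + c₂·f`. -/
def mobCost (c₁ c₂ f : ℝ) : ℝ := c₁ * f ^ 2 + c₂ * f

/-- Manipulation gain `G(f, Q) = g_max·(1 − exp(−k·max(f − Q, 0)))`. -/
noncomputable def manipGain (gmax k f Q : ℝ) : ℝ := gmax * (1 - Real.exp (-k * max (f - Q) 0))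

open Set Filter Topology

theorem exists_gt_forall_mem_Ioo_lt {α β : Type*} [LinearOrder α] [NoMaxOrder α]
    [TopologicalSpace α] [OrderTopology α] [LinearOrder β] [TopologicalSpace β]
    [OrderClosedTopology β] {u v : α → β} {a b : α} (hab : a < b)
    (hu : ContinuousWithinAt u (Ici b) b) (hv : ContinuousWithinAt v (Ici b) b)
    (huv : ∀ x ∈ Ioc a b, u x < v x) :
    ∃ c, b < c ∧ ∀ x ∈ Ioo a c, u x < v x := by
  have h_right : ∀ᶠ x in 𝓝[≥] b, u x < v x :=
    hu.eventually_lt hv (huv b (right_mem_Ioc.2 hab))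
  obtain ⟨c, hbc, hc⟩ := mem_nhdsGE_iff_exists_Ico_subset.1 h_right
  refine ⟨c, hbc, fun x hx ↦ ?_⟩
  rcases le_total x b with hxb | hbx
  · exact huv x ⟨hx.1, hxb⟩
  · exact hc ⟨hbx, hx.2⟩

theorem continuous_mobCost (c₁ c₂ : ℝ) : Continuous (mobCost c₁ c₂) := by
  unfold mobCost
  fun_prop

theorem continuous_manipGain (gmax k Q : ℝ) : Continuous fun f ↦ manipGain gmax k f Q := by
  unfold manipGain
  fun_prop

theorem manipGain_eq_zero_of_le (gmax k : ℝ) {f Q : ℝ} (hfQ : f ≤ Q) :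
    manipGain gmax k f Q = 0 := by
  simp [manipGain, max_eq_right (sub_nonpos.2 hfQ)]

theorem mobCost_pos_of_mem_Ioc {c₁ c₂ f Q : ℝ} (hc₂ : 0 ≤ c₂) (hcQ : 0 < c₁ * Q + c₂)
    (hf : f ∈ Ioc 0 Q) : 0 < mobCost c₁ c₂ f := by
  obtain ⟨hf_pos, hfQ⟩ := hf
  -- The affine function `x ↦ c₁ * x + c₂` is nonnegative at `0` and positive at `Q`.
  have h_interp : 0 < Q * (c₁ * f + c₂) :=
    calc
      0 < f * (c₁ * Q + c₂) + (Q - f) * c₂ :=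
        add_pos_of_pos_of_nonneg (mul_pos hf_pos hcQ) (mul_nonneg (sub_nonneg.2 hfQ) hc₂)
      _ = Q * (c₁ * f + c₂) := by ring
  calc
    0 < f * (c₁ * f + c₂) :=
      mul_pos hf_pos (pos_of_mul_pos_right h_interp (hf_pos.trans_le hfQ).le)
    _ = mobCost c₁ c₂ f := by unfold mobCost; ring

-- Up to the quorum the gain vanishes while the cost is positive; by continuity at `Q`, the cost
-- still exceeds the gain slightly beyond the quorum.
theorem manipulation_deterrence_strong_general {c₁ c₂ Q : ℝ} (gmax k : ℝ)
    (hc₂ : 0 ≤ c₂) (hcQ : 0 < c₁ * Q + c₂) (hQ : 0 < Q) :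
    ∃ fstar : ℝ, Q < fstar ∧
      ∀ f : ℝ, 0 < f → f < fstar → mobCost c₁ c₂ f > manipGain gmax k f Q := by
  have h_upto_quorum : ∀ f ∈ Ioc 0 Q, manipGain gmax k f Q < mobCost c₁ c₂ f := fun f hf ↦ by
    rw [manipGain_eq_zero_of_le gmax k hf.2]
    exact mobCost_pos_of_mem_Ioc hc₂ hcQ hf
  obtain ⟨fstar, hQ_lt, h_lt⟩ := exists_gt_forall_mem_Ioo_lt hQ
    (continuous_manipGain gmax k Q).continuousWithinAt
    (continuous_mobCost c₁ c₂).continuousWithinAt h_upto_quorum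
  exact ⟨fstar, hQ_lt, fun f hf_pos hf_lt ↦ h_lt f ⟨hf_pos, hf_lt⟩⟩

/-- Strengthened Manipulation Deterrence: for any quorum `Q > 0` there exists
`f* > Q` (strictly greater than the quorum threshold) such that for every `f`
with `0 < f < f*`, `C(f) > G(f, Q)`. -/
theorem manipulation_deterrence_strong (c₁ c₂ gmax k Q : ℝ)
    (hc₁ : 0 < c₁) (hc₂ : 0 < c₂) (hg : 0 < gmax) (hk : 0 < k) (hQ : 0 < Q) :
    ∃ fstar : ℝ, Q < fstar ∧
      ∀ f : ℝ, 0 < f → f < fstar → mobCost c₁ c₂ f > manipGain gmax k f Q :=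
  manipulation_deterrence_strong_general gmax k hc₂.le (by positivity) hQ
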